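/- Let n be a natural number with n ≥ 2 and let t : ℕ → ℕ be a finitely supported function with t(0) = t(1) = 0; write t₂ = t(2) and s = ∑_{r ≥ 2} t_r, and assume s ≥ 1. Define the rational number h = (1/s)·(−2n + ∑_{r ≥ 2} r(r−1)·t_r − ∑_{r ≥ 2} r²·t_r). If 4n − t₂ + ∑_{r ≥ 3} (r − 4)·t_r ≤ 72, then h ≥ −72. -/

import Mathlib

open Finset

/-!
Write `I = ∑ r t_r`. Since `r(r - 1) - r² = -r`, the Harbourne constant of `n` curves of
self-intersection `e` is `(e n - I) / s`. On the other hand `I - 4s = ∑ (r - 4) t_r`, and the terms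
with `r ≤ 2` contribute at most `-2 t₂`, so the inequality `4n - t₂ + ∑_{r ≥ 3} (r - 4) t_r ≤ c`
gives `I ≤ 4s + c - 4n - t₂`. Hence the Harbourne constant is at least
`-4 + ((4 + e) n + t₂ - c) / s`. When `4 ≤ (4 + e) n` this is at least `-4 - (c - 4) / s`, which for
`c ≥ 4` is smallest at `s = 1`.
-/

/-- The number `∑ r t_r` of incidences between the curves and the singular points of an arrangement
with `t r` points of multiplicity `r`. -/
def incidenceCount (t : ℕ →₀ ℕ) : ℕ :=
  ∑ r ∈ t.support, r * t r

/-- The Harbourne constant `(D² - ∑_P m_P²) / s` of a transversal arrangement `D` of `n` curves of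
self-intersection `e` with `t r` points of multiplicity `r`; its number of singular points `s` is
`t.degree`, and `D² = e n + ∑ r(r - 1) t_r`. It has the junk value `0` when `t = 0`. -/
noncomputable def harbourneConstant (e : ℤ) (n : ℕ) (t : ℕ →₀ ℕ) : ℚ :=
  (e * n + ∑ r ∈ t.support, (r : ℚ) * (r - 1) * t r - ∑ r ∈ t.support, (r : ℚ) ^ 2 * t r) /
    t.degree

theorem sum_support_eq_sum_range_add_sum_filter_le {M N : Type*} [Zero M] [AddCommMonoid N]
    (t : ℕ →₀ M) (g : ℕ → M → N) (hg : ∀ r, g r 0 = 0) (k : ℕ) :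
    ∑ r ∈ t.support, g r (t r) =
      ∑ r ∈ range k, g r (t r) + ∑ r ∈ t.support with k ≤ r, g r (t r) := by
  have sum_low : ∑ r ∈ t.support with ¬k ≤ r, g r (t r) = ∑ r ∈ range k, g r (t r) := by
    refine sum_subset (fun r hr => ?_) fun r hr hr' => ?_
    · simpa using (mem_filter.mp hr).2
    · have : t r = 0 := by simp_all
      rw [this, hg]
  rw [← sum_filter_not_add_sum_filter t.support (k ≤ ·), sum_low]

section Multiplicities

variable (t : ℕ →₀ ℕ)

theorem sum_sub_mul_eq_incidenceCount_sub (a : ℤ) :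
    ∑ r ∈ t.support, ((r : ℤ) - a) * t r = incidenceCount t - a * t.degree := by
  simp only [sub_mul, sum_sub_distrib, ← mul_sum, incidenceCount, Finsupp.degree_apply,
    Nat.cast_sum, Nat.cast_mul]

theorem sum_sub_four_mul_le :
    ∑ r ∈ t.support, ((r : ℤ) - 4) * t r ≤
      -2 * t 2 + ∑ r ∈ t.support with 3 ≤ r, ((r : ℤ) - 4) * t r := by
  rw [sum_support_eq_sum_range_add_sum_filter_le t (fun r m => ((r : ℤ) - 4) * m) (by simp) 3]
  gcongr
  simp only [sum_range_succ, sum_range_zero]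
  lia

variable {t}

theorem incidenceCount_le {n : ℕ} {c : ℤ}
    (h : 4 * (n : ℤ) - t 2 + ∑ r ∈ t.support with 3 ≤ r, ((r : ℤ) - 4) * t r ≤ c) :
    (incidenceCount t : ℤ) ≤ 4 * t.degree + c - 4 * n - t 2 := by
  linarith [sum_sub_four_mul_le t, sum_sub_mul_eq_incidenceCount_sub t 4]

end Multiplicities

section HarbourneConstant

variable {e : ℤ} {n : ℕ} {t : ℕ →₀ ℕ} {c : ℤ}

theorem harbourneConstant_eq_sub_incidenceCount_div (e : ℤ) (n : ℕ) (t : ℕ →₀ ℕ) :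
    harbourneConstant e n t = (e * n - incidenceCount t) / t.degree := by
  have sum_sub_sum : ∑ r ∈ t.support, (r : ℚ) * (r - 1) * t r - ∑ r ∈ t.support, (r : ℚ) ^ 2 * t r
      = -incidenceCount t := by
    simp only [incidenceCount, Nat.cast_sum, Nat.cast_mul, ← sum_sub_distrib, ← sum_neg_distrib]
    exact sum_congr rfl fun r _ => by ring
  rw [harbourneConstant, add_sub_assoc, sum_sub_sum, ← sub_eq_add_neg]

theorem neg_four_add_div_le_harbourneConstant (ht : t ≠ 0)
    (h : 4 * (n : ℤ) - t 2 + ∑ r ∈ t.support with 3 ≤ r, ((r : ℤ) - 4) * t r ≤ c) :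
    -4 + ((4 + e) * n + t 2 - c) / t.degree ≤ harbourneConstant e n t := by
  have degree_pos : (0 : ℚ) < t.degree := by
    exact_mod_cast Nat.pos_of_ne_zero (mt (Finsupp.degree_eq_zero_iff t).mp ht)
  have incidence_le : (incidenceCount t : ℚ) ≤ 4 * t.degree + c - 4 * n - t 2 := by
    exact_mod_cast incidenceCount_le h
  rw [harbourneConstant_eq_sub_incidenceCount_div, le_div_iff₀ degree_pos, add_mul,
    div_mul_cancel₀ _ degree_pos.ne']
  linarith

theorem neg_le_harbourneConstant (ht : t ≠ 0) (hc : 4 ≤ c) (hn : 4 ≤ (4 + e) * n)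
    (h : 4 * (n : ℤ) - t 2 + ∑ r ∈ t.support with 3 ≤ r, ((r : ℤ) - 4) * t r ≤ c) :
    -(c : ℚ) ≤ harbourneConstant e n t := by
  have one_le_degree : (1 : ℚ) ≤ t.degree := by
    exact_mod_cast Nat.one_le_iff_ne_zero.mpr (mt (Finsupp.degree_eq_zero_iff t).mp ht)
  have hc' : (0 : ℚ) ≤ c - 4 := sub_nonneg.mpr (by exact_mod_cast hc)
  have hn' : (4 : ℚ) ≤ (4 + e) * n := by exact_mod_cast hn
  calc -(c : ℚ) = -4 - (c - 4) := by ring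
    _ ≤ -4 - (c - 4) / t.degree := by gcongr; exact div_le_self hc' one_le_degree
    _ = -4 + (4 - c) / t.degree := by ring
    _ ≤ -4 + ((4 + e) * n + t 2 - c) / t.degree := by
      gcongr
      exact le_add_of_le_of_nonneg hn' (Nat.cast_nonneg _)
    _ ≤ harbourneConstant e n t := neg_four_add_div_le_harbourneConstant ht h

end HarbourneConstant

/-- Combined form of the main theorem and corollary: for a transversal
arrangement of `n ≥ 2` rational curves with multiplicity counts `t`
(`t 0 = t 1 = 0`), `s = ∑_{r≥2} t_r ≥ 1`, and Harbourne constant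
`h = (1/s)(−2n + ∑_{r≥2} r(r−1) t_r − ∑_{r≥2} r² t_r)`, the inequality
`4n − t₂ + ∑_{r≥3}(r−4)t_r ≤ 72` implies `h ≥ −72`. -/
theorem stmt_7 (n : ℕ) (hn : 2 ≤ n) (t : ℕ →₀ ℕ) (h0 : t 0 = 0) (h1 : t 1 = 0)
    (s : ℕ) (hs : s = ∑ r ∈ t.support, t r) (hs1 : 1 ≤ s)
    (h : ℚ)
    (hh : h = (1 / (s : ℚ)) * (-2 * n + ∑ r ∈ t.support, (r : ℚ) * (r - 1) * t r
      - ∑ r ∈ t.support, (r : ℚ) ^ 2 * t r))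
    (hineq : 4 * (n : ℤ) - t 2
        + ∑ r ∈ t.support.filter (fun r => 3 ≤ r), ((r : ℤ) - 4) * t r ≤ 72) :
    h ≥ -72 := by
  have s_eq_degree : s = t.degree := by rw [hs, Finsupp.degree_apply]
  have h_eq : h = harbourneConstant (-2) n t := by
    rw [hh, s_eq_degree, harbourneConstant, one_div_mul_eq_div, Int.cast_neg, Int.cast_ofNat]
  have t_ne_zero : t ≠ 0 := by
    rintro rfl
    simp [hs] at hs1
  rw [h_eq]
  exact_mod_cast neg_le_harbourneConstant t_ne_zero (by norm_num) (by lia) hineq
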